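/- Let F : ℝ^(m+1) → ℝ be continuous, positive away from 0, and positively 1-homogeneous. Then the Cartan area integrand satisfies A^F(Z) = 1 / R[F^(-m)](Z) for all Z ∈ ℝ^(m+1) \ {0}, where R is the extended spherical Radon transform. -/

import Mathlib

open MeasureTheory Classical

/-- The Cartan area integrand associated to `F`, extended by `A^F(0) = 0`. -/
noncomputable def cartanAF (m : ℕ) (F : EuclideanSpace ℝ (Fin (m + 1)) → ℝ)
    (Z : EuclideanSpace ℝ (Fin (m + 1))) : ℝ :=
  if Z = 0 then 0 else
    ‖Z‖ * (μH[m] (Metric.closedBall (0 : EuclideanSpace ℝ (Fin m)) 1)).toReal /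
      (μH[m] {T | T ∈ (ℝ ∙ Z)ᗮ ∧ F T ≤ 1}).toReal

/-- The extended spherical Radon transform. -/
noncomputable def radonT (m : ℕ) (g : EuclideanSpace ℝ (Fin (m + 1)) → ℝ)
    (Z : EuclideanSpace ℝ (Fin (m + 1))) : ℝ :=
  (1 / (‖Z‖ * (μH[(m : ℝ) - 1]
      (Metric.sphere (0 : EuclideanSpace ℝ (Fin m)) 1)).toReal)) *
    ∫ ω in (Metric.sphere (0 : EuclideanSpace ℝ (Fin (m + 1))) 1 ∩
        ((ℝ ∙ Z)ᗮ : Submodule ℝ (EuclideanSpace ℝ (Fin (m + 1))))),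
      g ω ∂(μH[(m : ℝ) - 1])

/-!
Inside the hyperplane `Z^⊥`, of dimension `m`, polar coordinates express the volume of the body
`{F ≤ 1}` as `1 / m` times the integral of `F ^ (-m)` over the unit sphere against the polar
surface measure. That measure and the `(m - 1)`-dimensional Hausdorff measure are both invariant
under linear isometries, hence uniformly distributed on the sphere. By the Besicovitch
differentiation theorem the density of one uniformly distributed measure with respect to another
is constant, so the two are proportional. Comparing total masses fixes the constant to be
`m · H^m(B) / H^(m-1)(S)`, without computing either of these numbers.
-/

open Metric Set Filter Topology Module Pointwise
open scoped ENNReal NNReal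

section UniformlyDistributed

variable {X : Type*} [MetricSpace X] [MeasurableSpace X]

/-- The measure `μ` is concentrated on `S`, and balls of equal radii centred on `S` have equal
mass. Uniformly distributed measures in the sense of Mattila are the case where `S` is the support
of `μ`; a larger set `S` is allowed here so that the sphere need not be shown to be the support. -/
structure UniformlyDistributedOn (μ : Measure X) (S : Set X) : Prop where
  measure_compl : μ Sᶜ = 0
  measure_closedBall_eq : ∀ x ∈ S, ∀ y ∈ S, ∀ r, μ (closedBall x r) = μ (closedBall y r)

namespace UniformlyDistributedOn

variable {μ ν : Measure X} {S : Set X}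

theorem add (hμ : UniformlyDistributedOn μ S) (hν : UniformlyDistributedOn ν S) :
    UniformlyDistributedOn (μ + ν) S where
  measure_compl := by rw [Measure.add_apply, hμ.measure_compl, hν.measure_compl, add_zero]
  measure_closedBall_eq x hx y hy r := by
    rw [Measure.add_apply, Measure.add_apply, hμ.measure_closedBall_eq x hx y hy,
      hν.measure_closedBall_eq x hx y hy]

variable [SecondCountableTopology X] [HasBesicovitchCovering X] [BorelSpace X]

theorem exists_eq_smul_of_absolutelyContinuous [IsLocallyFiniteMeasure μ]
    [IsLocallyFiniteMeasure ν] (hμ : UniformlyDistributedOn μ S) (hν : UniformlyDistributedOn ν S)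
    (hμν : μ ≪ ν) : ∃ c : ℝ≥0∞, μ = c • ν := by
  rcases eq_or_ne ν 0 with rfl | hν0
  · exact ⟨0, by simpa using Measure.absolutelyContinuous_zero_iff.1 hμν⟩
  have : (ae ν).NeBot := ae_neBot.2 hν0
  have hlim := (Besicovitch.ae_tendsto_rnDeriv μ ν).and (ae_iff.2 hν.measure_compl)
  obtain ⟨x₀, hx₀, hx₀S⟩ := hlim.exists
  have hconst : μ.rnDeriv ν =ᵐ[ν] fun _ => μ.rnDeriv ν x₀ := by
    filter_upwards [hlim] with x ⟨hx, hxS⟩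
    refine tendsto_nhds_unique hx (hx₀.congr fun r => ?_)
    rw [hμ.measure_closedBall_eq x₀ hx₀S x hxS, hν.measure_closedBall_eq x₀ hx₀S x hxS]
  refine ⟨μ.rnDeriv ν x₀, ?_⟩
  rw [← withDensity_const, ← withDensity_congr_ae hconst, Measure.withDensity_rnDeriv_eq _ _ hμν]

theorem measure_univ_smul_comm [IsFiniteMeasure μ] [IsFiniteMeasure ν]
    (hμ : UniformlyDistributedOn μ S) (hν : UniformlyDistributedOn ν S) :
    μ univ • ν = ν univ • μ := by
  obtain ⟨a, ha⟩ := hμ.exists_eq_smul_of_absolutelyContinuous (hμ.add hν)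
    (Measure.le_add_right le_rfl).absolutelyContinuous
  obtain ⟨b, hb⟩ := hν.exists_eq_smul_of_absolutelyContinuous (hμ.add hν)
    (Measure.le_add_left le_rfl).absolutelyContinuous
  generalize μ + ν = τ at ha hb
  rw [ha, hb, smul_smul, smul_smul, Measure.smul_apply, Measure.smul_apply, smul_eq_mul,
    smul_eq_mul, mul_right_comm, mul_comm a, mul_right_comm]

end UniformlyDistributedOn

end UniformlyDistributed

section RotationInvariance

theorem preimage_linearEquiv_set_smul {R M N : Type*} [Semiring R] [AddCommMonoid M]
    [AddCommMonoid N] [Module R M] [Module R N] (e : M ≃ₗ[R] N) (I : Set R) (A : Set N) :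
    e ⁻¹' (I • A) = I • (e ⁻¹' A) := by
  rw [← LinearEquiv.image_symm_eq_preimage, ← LinearEquiv.image_symm_eq_preimage]
  exact image_image2_distrib_right (map_smul e.symm)

variable {E : Type*} [NormedAddCommGroup E] [InnerProductSpace ℝ E]

theorem exists_linearIsometryEquiv_apply_eq {x y : E} (h : ‖x‖ = ‖y‖) :
    ∃ e : E ≃ₗᵢ[ℝ] E, e x = y :=
  ⟨(ℝ ∙ (x - y))ᗮ.reflection, Submodule.reflection_sub h⟩

variable [MeasurableSpace E] [BorelSpace E]

theorem uniformlyDistributedOn_sphere {μ : Measure E} {r : ℝ} (hμ : μ (sphere 0 r)ᶜ = 0)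
    (hinv : ∀ e : E ≃ₗᵢ[ℝ] E, MeasurePreserving e μ μ) :
    UniformlyDistributedOn μ (sphere 0 r) where
  measure_compl := hμ
  measure_closedBall_eq x hx y hy s := by
    obtain ⟨e, rfl⟩ := exists_linearIsometryEquiv_apply_eq (x := x) (y := y) <| by
      rw [mem_sphere_zero_iff_norm.1 hx, mem_sphere_zero_iff_norm.1 hy]
    rw [← (hinv e).measure_preimage (s := closedBall (e x) s)
      measurableSet_closedBall.nullMeasurableSet, e.preimage_closedBall, e.symm_apply_apply]

theorem measurePreserving_restrict_sphere {μ : Measure E} (e : E ≃ₗᵢ[ℝ] E)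
    (he : MeasurePreserving e μ μ) (r : ℝ) :
    MeasurePreserving e (μ.restrict (sphere 0 r)) (μ.restrict (sphere 0 r)) := by
  simpa using he.restrict_preimage (isClosed_sphere (x := (0 : E)) (ε := r)).measurableSet

theorem map_coe_toSphere_apply (μ : Measure E) {A : Set E} (hA : MeasurableSet A) :
    μ.toSphere.map Subtype.val A = finrank ℝ E * μ (Ioo (0 : ℝ) 1 • (A ∩ sphere 0 1)) := by
  rw [Measure.map_apply measurable_subtype_coe hA,
    μ.toSphere_apply' (measurable_subtype_coe hA), Subtype.image_preimage_coe, inter_comm]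

theorem measurePreserving_map_coe_toSphere {μ : Measure E} (e : E ≃ₗᵢ[ℝ] E)
    (he : MeasurePreserving e μ μ) :
    MeasurePreserving e (μ.toSphere.map Subtype.val) (μ.toSphere.map Subtype.val) := by
  have he_meas : Measurable e := e.continuous.measurable
  refine ⟨he_meas, Measure.ext fun A hA => ?_⟩
  have hcone : e ⁻¹' (Ioo (0 : ℝ) 1 • (A ∩ sphere 0 1)) =
      Ioo (0 : ℝ) 1 • (e ⁻¹' A ∩ sphere 0 1) := by
    rw [← e.coe_toLinearEquiv, preimage_linearEquiv_set_smul, preimage_inter, e.coe_toLinearEquiv,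
      e.preimage_sphere, map_zero]
  rw [Measure.map_apply he_meas hA, map_coe_toSphere_apply μ (he_meas hA),
    map_coe_toSphere_apply μ hA, ← hcone]
  congr 1
  exact he.measure_preimage_emb e.toHomeomorph.measurableEmbedding _

end RotationInvariance

section HausdorffMeasureSphere

theorem hausdorffMeasure_image_lt_top_of_locallyLipschitz {V X : Type*} [NormedAddCommGroup V]
    [NormedSpace ℝ V] [FiniteDimensional ℝ V] [MetricSpace X]
    [MeasurableSpace X] [BorelSpace X] {f : V → X} (hf : LocallyLipschitz f) {K : Set V}
    (hK : IsCompact K) : μH[finrank ℝ V] (f '' K) < ∞ := by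
  borelize V
  obtain ⟨C, hC⟩ := (hf.locallyLipschitzOn (s := K)).exists_lipschitzOnWith_of_compact hK
  exact (hC.hausdorffMeasure_image_le (Nat.cast_nonneg _)).trans_lt
    (ENNReal.mul_lt_top (by simp) hK.measure_lt_top)

variable {E : Type*} [NormedAddCommGroup E] [InnerProductSpace ℝ E]

theorem locallyLipschitz_coe_stereoInvFun {v : E} (hv : ‖v‖ = 1) :
    LocallyLipschitz fun w => (stereoInvFun hv w : E) :=
  (contDiff_stereoInvFunAux.comp (ℝ ∙ v)ᗮ.subtypeL.contDiff).locallyLipschitz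

theorem image_stereoInvFun_closedBall_mem_nhdsWithin {x : E} (hx : ‖-x‖ = 1) :
    (fun w => (stereoInvFun hx w : E)) '' closedBall 0 1 ∈ 𝓝[sphere 0 1] x := by
  have hx_eq : (stereoInvFun hx 0 : E) = x := by
    simp [smul_smul]
  have hnhds := (isOpenEmbedding_stereographic_symm hx).isOpenMap.image_mem_nhds
    (closedBall_mem_nhds 0 one_pos)
  have hmap := image_mem_map (m := ((↑) : sphere (0 : E) 1 → E)) hnhds
  rw [map_nhds_subtype_val, image_image] at hmap
  change _ ∈ 𝓝[sphere 0 1] (stereoInvFun hx 0 : E) at hmap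
  rwa [hx_eq] at hmap

theorem ball_subset_orthogonalProjectionOnto_image_sphere {v : E} (hv : ‖v‖ = 1) :
    ball (0 : (ℝ ∙ v)ᗮ) 1 ⊆ (ℝ ∙ v)ᗮ.orthogonalProjectionOnto '' sphere (0 : E) 1 := by
  intro w hw
  rw [mem_ball_zero_iff] at hw
  have hwv : inner ℝ (w : E) v = 0 := Submodule.mem_orthogonal_singleton_iff_inner_left.1 w.2
  refine ⟨w + √(1 - ‖w‖ ^ 2) • v, ?_, ?_⟩
  · have hheight : 0 ≤ 1 - ‖w‖ ^ 2 := by nlinarith [norm_nonneg w]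
    rw [mem_sphere_zero_iff_norm, ← sq_eq_sq₀ (norm_nonneg _) zero_le_one, norm_add_sq_real,
      inner_smul_right, hwv, norm_smul, hv, mul_one, Real.norm_eq_abs, sq_abs,
      Real.sq_sqrt hheight, Submodule.coe_norm]
    ring
  · rw [map_add, map_smul, Submodule.orthogonalProjectionOnto_mem_subspace_eq_self,
      Submodule.orthogonalProjectionOnto_orthogonalComplement_singleton_eq_zero, smul_zero,
      add_zero]

variable [FiniteDimensional ℝ E]

theorem cast_finrank_orthogonal_span_singleton {v : E} (hv : v ≠ 0) :
    (finrank ℝ (ℝ ∙ v)ᗮ : ℝ) = finrank ℝ E - 1 := by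
  rw [← (ℝ ∙ v).finrank_add_finrank_orthogonal, finrank_span_singleton hv]
  push_cast
  ring

variable [MeasurableSpace E] [BorelSpace E]

theorem hausdorffMeasure_sphere_lt_top : μH[(finrank ℝ E : ℝ) - 1] (sphere (0 : E) 1) < ∞ := by
  refine (isCompact_sphere (0 : E) 1).measure_lt_top_of_nhdsWithin fun x hx => ?_
  have hx_norm : ‖-x‖ = 1 := by rwa [norm_neg, ← mem_sphere_zero_iff_norm]
  refine ⟨_, image_stereoInvFun_closedBall_mem_nhdsWithin hx_norm, ?_⟩
  rw [← cast_finrank_orthogonal_span_singleton (norm_ne_zero_iff.1 (hx_norm ▸ one_ne_zero))]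
  exact hausdorffMeasure_image_lt_top_of_locallyLipschitz
    (locallyLipschitz_coe_stereoInvFun hx_norm) (isCompact_closedBall 0 1)

theorem hausdorffMeasure_sphere_pos [Nontrivial E] :
    0 < μH[(finrank ℝ E : ℝ) - 1] (sphere (0 : E) 1) := by
  obtain ⟨v, hv⟩ := exists_norm_eq E zero_le_one
  rw [← cast_finrank_orthogonal_span_singleton (norm_ne_zero_iff.1 (hv ▸ one_ne_zero))]
  calc
    0 < μH[finrank ℝ (ℝ ∙ v)ᗮ] (ball (0 : (ℝ ∙ v)ᗮ) 1) := measure_ball_pos _ 0 one_pos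
    _ ≤ μH[finrank ℝ (ℝ ∙ v)ᗮ] ((ℝ ∙ v)ᗮ.orthogonalProjectionOnto '' sphere (0 : E) 1) :=
      measure_mono (ball_subset_orthogonalProjectionOnto_image_sphere hv)
    _ ≤ μH[finrank ℝ (ℝ ∙ v)ᗮ] (sphere (0 : E) 1) :=
      hausdorffMeasure_orthogonalProjectionOnto_le _ _ _ (Nat.cast_nonneg _)

theorem hausdorffMeasure_sphere_smul_toSphere [Nontrivial E] :
    μH[(finrank ℝ E : ℝ) - 1] (sphere (0 : E) 1) •
        (μH[finrank ℝ E] : Measure E).toSphere.map Subtype.val =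
      (finrank ℝ E * μH[finrank ℝ E] (closedBall (0 : E) 1)) •
        (μH[(finrank ℝ E : ℝ) - 1]).restrict (sphere 0 1) := by
  have hsphere_compl : MeasurableSet (sphere (0 : E) 1)ᶜ := isClosed_sphere.measurableSet.compl
  have : IsFiniteMeasure ((μH[(finrank ℝ E : ℝ) - 1]).restrict (sphere (0 : E) 1)) :=
    isFiniteMeasure_restrict.2 hausdorffMeasure_sphere_lt_top.ne
  have hH : UniformlyDistributedOn
      ((μH[(finrank ℝ E : ℝ) - 1]).restrict (sphere (0 : E) 1)) (sphere 0 1) :=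
    uniformlyDistributedOn_sphere (by simp [Measure.restrict_apply hsphere_compl]) fun e =>
      measurePreserving_restrict_sphere e (e.toIsometryEquiv.measurePreserving_hausdorffMeasure _) 1
  have hσ : UniformlyDistributedOn
      ((μH[finrank ℝ E] : Measure E).toSphere.map Subtype.val) (sphere (0 : E) 1) :=
    uniformlyDistributedOn_sphere (by simp [map_coe_toSphere_apply _ hsphere_compl]) fun e =>
      measurePreserving_map_coe_toSphere e (e.toIsometryEquiv.measurePreserving_hausdorffMeasure _)
  have h := hH.measure_univ_smul_comm hσ
  rwa [Measure.restrict_apply_univ, Measure.map_apply measurable_subtype_coe .univ, preimage_univ,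
    Measure.toSphere_apply_univ, ← Measure.addHaar_closedBall_eq_addHaar_ball] at h

end HausdorffMeasureSphere

section PolarCoordinates

theorem volumeIoiPow_apply_Iic (n : ℕ) (x : Ioi (0 : ℝ)) :
    Measure.volumeIoiPow n (Iic x) = ENNReal.ofReal (x.1 ^ (n + 1) / (n + 1)) := by
  have hx : Measure.volumeIoiPow n {x} = 0 := by
    refine withDensity_absolutelyContinuous _ _ ?_
    rw [comap_subtype_coe_apply measurableSet_Ioi, image_singleton, measure_singleton]
  rw [← Measure.volumeIoiPow_apply_Iio, ← Iio_union_right,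
    measure_congr (union_ae_eq_left_of_ae_eq_empty (ae_eq_empty.2 hx))]

variable {E : Type*} [NormedAddCommGroup E] [NormedSpace ℝ E] [FiniteDimensional ℝ E]
  [MeasurableSpace E] [BorelSpace E] [Nontrivial E]

theorem measure_eq_lintegral_toSphere (μ : Measure E) [μ.IsAddHaarMeasure] {A : Set E}
    (hA : MeasurableSet A) :
    μ A = ∫⁻ ω : sphere (0 : E) 1,
      Measure.volumeIoiPow (finrank ℝ E - 1) {r | (r : ℝ) • (ω : E) ∈ A} ∂μ.toSphere := by
  have hA' : MeasurableSet (((↑) : ({0}ᶜ : Set E) → E) ⁻¹' A) := measurable_subtype_coe hA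
  have hpolar := μ.measurePreserving_homeomorphUnitSphereProd.symm
    (homeomorphUnitSphereProd E).toMeasurableEquiv
  calc
    μ A = μ.comap (↑) (((↑) : ({0}ᶜ : Set E) → E) ⁻¹' A) := by
      rw [comap_subtype_coe_apply (measurableSet_singleton _).compl, Subtype.image_preimage_coe,
        ← sdiff_eq_compl_inter, measure_sdiff_null (measure_singleton _)]
    _ = _ := by
      rw [← hpolar.measure_preimage hA'.nullMeasurableSet,
        Measure.prod_apply (hpolar.measurable hA')]
      rfl

variable {G : E → ℝ}

theorem lintegral_toSphere_inv_pow (μ : Measure E) [μ.IsAddHaarMeasure] (hG : Measurable G)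
    (hpos : ∀ y, y ≠ 0 → 0 < G y) (hhom : ∀ t : ℝ, 0 < t → ∀ y, G (t • y) = t * G y) :
    ∫⁻ ω : sphere (0 : E) 1, ENNReal.ofReal (G ω ^ finrank ℝ E)⁻¹ ∂μ.toSphere =
      finrank ℝ E * μ {x | G x ≤ 1} := by
  rw [measure_eq_lintegral_toSphere μ (measurableSet_le hG measurable_const),
    ← lintegral_const_mul' _ _ (ENNReal.natCast_ne_top _)]
  refine lintegral_congr fun ω => ?_
  have hω : 0 < G ω := hpos _ (ne_zero_of_mem_unit_sphere ω)
  have hray : {r : Ioi (0 : ℝ) | (r : ℝ) • (ω : E) ∈ {x | G x ≤ 1}} =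
      Iic ⟨(G ω)⁻¹, inv_pos.2 hω⟩ := by
    ext r
    change G ((r : ℝ) • (ω : E)) ≤ 1 ↔ (r : ℝ) ≤ (G ω)⁻¹
    rw [hhom _ r.2, ← one_div, le_div_iff₀ hω]
  obtain ⟨n, hn⟩ : ∃ n, finrank ℝ E = n + 1 := Nat.exists_eq_add_one.2 finrank_pos
  rw [hray, hn, Nat.add_sub_cancel, volumeIoiPow_apply_Iic, ← ENNReal.ofReal_natCast,
    ← ENNReal.ofReal_mul (Nat.cast_nonneg _), Nat.cast_add_one,
    mul_div_cancel₀ _ (Nat.cast_add_one_ne_zero n), inv_pow]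

end PolarCoordinates

section SublevelVolume

variable {E : Type*} [NormedAddCommGroup E] [InnerProductSpace ℝ E] [FiniteDimensional ℝ E]
  [MeasurableSpace E] [BorelSpace E] [Nontrivial E] {G : E → ℝ}

theorem hausdorffMeasure_sphere_mul_sublevel (hG : Measurable G)
    (hpos : ∀ y, y ≠ 0 → 0 < G y) (hhom : ∀ t : ℝ, 0 < t → ∀ y, G (t • y) = t * G y) :
    μH[(finrank ℝ E : ℝ) - 1] (sphere (0 : E) 1) * μH[finrank ℝ E] {x | G x ≤ 1} =
      μH[finrank ℝ E] (closedBall (0 : E) 1) *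
        ∫⁻ ω in sphere (0 : E) 1, ENNReal.ofReal (G ω ^ finrank ℝ E)⁻¹
          ∂μH[(finrank ℝ E : ℝ) - 1] := by
  have h := congrArg (fun ν : Measure E => ∫⁻ ω, ENNReal.ofReal (G ω ^ finrank ℝ E)⁻¹ ∂ν)
    (hausdorffMeasure_sphere_smul_toSphere (E := E))
  have hsphere : MeasurableEmbedding ((↑) : sphere (0 : E) 1 → E) :=
    .subtype_coe isClosed_sphere.measurableSet
  simp only [lintegral_smul_measure, smul_eq_mul, hsphere.lintegral_map,
    lintegral_toSphere_inv_pow _ hG hpos hhom, mul_left_comm _ (finrank ℝ E : ℝ≥0∞),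
    mul_assoc] at h
  exact (ENNReal.mul_right_inj (Nat.cast_ne_zero.2 finrank_pos.ne') (ENNReal.natCast_ne_top _)).1 h

theorem toReal_hausdorffMeasure_sublevel (hG : Measurable G)
    (hpos : ∀ y, y ≠ 0 → 0 < G y) (hhom : ∀ t : ℝ, 0 < t → ∀ y, G (t • y) = t * G y) :
    (μH[finrank ℝ E] {x | G x ≤ 1}).toReal =
      (μH[finrank ℝ E] (closedBall (0 : E) 1)).toReal *
        (∫ ω in sphere (0 : E) 1, (G ω ^ finrank ℝ E)⁻¹ ∂μH[(finrank ℝ E : ℝ) - 1]) /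
          (μH[(finrank ℝ E : ℝ) - 1] (sphere (0 : E) 1)).toReal := by
  have hnonneg : ∀ ω ∈ sphere (0 : E) 1, 0 ≤ (G ω ^ finrank ℝ E)⁻¹ := fun ω hω =>
    (inv_pos.2 (pow_pos (hpos ω (ne_zero_of_mem_unit_sphere ⟨ω, hω⟩)) _)).le
  have hσ : (μH[(finrank ℝ E : ℝ) - 1] (sphere (0 : E) 1)).toReal ≠ 0 :=
    ENNReal.toReal_ne_zero.2
      ⟨hausdorffMeasure_sphere_pos.ne', hausdorffMeasure_sphere_lt_top.ne⟩
  rw [eq_div_iff hσ, mul_comm, ← ENNReal.toReal_mul,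
    hausdorffMeasure_sphere_mul_sublevel hG hpos hhom, ENNReal.toReal_mul,
    integral_eq_lintegral_of_nonneg_ae
      (ae_restrict_of_forall_mem isClosed_sphere.measurableSet hnonneg)
      (hG.pow_const _).inv.aestronglyMeasurable]

end SublevelVolume

section Hyperplane

theorem setIntegral_sphere_inter_range {V W X : Type*} [NormedAddCommGroup V] [NormedSpace ℝ V]
    [CompleteSpace V] [MeasurableSpace V] [BorelSpace V] [NormedAddCommGroup W] [NormedSpace ℝ W]
    [MeasurableSpace W] [BorelSpace W] [NormedAddCommGroup X] [NormedSpace ℝ X]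
    (L : V →ₗᵢ[ℝ] W) (g : W → X) {d : ℝ} (hd : 0 ≤ d) (r : ℝ) :
    ∫ ω in sphere 0 r ∩ range L, g ω ∂μH[d] = ∫ ω in sphere 0 r, g (L ω) ∂μH[d] := by
  have hL : MeasurableEmbedding L := L.isometry.isClosedEmbedding.measurableEmbedding
  have hpre : L ⁻¹' sphere 0 r = sphere 0 r := by
    ext x
    simp only [mem_preimage, mem_sphere_zero_iff_norm, L.norm_map]
  rw [← Measure.restrict_restrict isClosed_sphere.measurableSet,
    ← L.isometry.map_hausdorffMeasure (.inl hd), hL.setIntegral_map, hpre]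

variable {m : ℕ} {Z : EuclideanSpace ℝ (Fin (m + 1))}

theorem exists_linearIsometry_range_eq_orthogonal (hZ : Z ≠ 0) :
    ∃ L : EuclideanSpace ℝ (Fin m) →ₗᵢ[ℝ] EuclideanSpace ℝ (Fin (m + 1)),
      range L = (ℝ ∙ Z)ᗮ := by
  have : Fact (finrank ℝ (EuclideanSpace ℝ (Fin (m + 1))) = m + 1) :=
    ⟨finrank_euclideanSpace_fin⟩
  exact ⟨(ℝ ∙ Z)ᗮ.subtypeₗᵢ.comp
    (OrthonormalBasis.fromOrthogonalSpanSingleton m hZ).repr.symm.toLinearIsometry,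
    by simp [range_comp]⟩

variable {L : EuclideanSpace ℝ (Fin m) →ₗᵢ[ℝ] EuclideanSpace ℝ (Fin (m + 1))}

theorem cartanAF_eq_of_range_eq (F : EuclideanSpace ℝ (Fin (m + 1)) → ℝ) (hZ : Z ≠ 0)
    (hL : range L = (ℝ ∙ Z)ᗮ) :
    cartanAF m F Z = ‖Z‖ * (μH[m] (closedBall (0 : EuclideanSpace ℝ (Fin m)) 1)).toReal /
      (μH[m] {x | F (L x) ≤ 1}).toReal := by
  have hbody : {T | T ∈ (ℝ ∙ Z)ᗮ ∧ F T ≤ 1} = {T | F T ≤ 1} ∩ range L := by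
    rw [hL, inter_comm]
    rfl
  rw [cartanAF, if_neg hZ, hbody, ← L.isometry.hausdorffMeasure_preimage (.inl m.cast_nonneg)]
  rfl

theorem radonT_eq_of_range_eq (hm : 1 ≤ m) (g : EuclideanSpace ℝ (Fin (m + 1)) → ℝ)
    (hL : range L = (ℝ ∙ Z)ᗮ) :
    radonT m g Z = (∫ ω in sphere 0 1, g (L ω) ∂μH[(m : ℝ) - 1]) /
      (‖Z‖ * (μH[(m : ℝ) - 1] (sphere (0 : EuclideanSpace ℝ (Fin m)) 1)).toReal) := by
  have hd : (0 : ℝ) ≤ m - 1 := sub_nonneg.2 (Nat.one_le_cast.2 hm)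
  rw [radonT, ← hL, setIntegral_sphere_inter_range L g hd, one_div_mul_eq_div]

end Hyperplane

theorem exists_pos_forall_mul_norm_le {E : Type*} [NormedAddCommGroup E] [NormedSpace ℝ E]
    [ProperSpace E] {F : E → ℝ} (hF : Continuous F) (hpos : ∀ y, y ≠ 0 → 0 < F y)
    (hhom : ∀ t : ℝ, 0 < t → ∀ y, F (t • y) = t * F y) :
    ∃ c > 0, ∀ y, c * ‖y‖ ≤ F y := by
  obtain ⟨c, hc, hcF⟩ := (isCompact_sphere (0 : E) 1).exists_forall_le' hF.continuousOn
    fun ω hω => hpos ω (ne_zero_of_mem_unit_sphere ⟨ω, hω⟩)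
  refine ⟨c, hc, fun y => ?_⟩
  rcases eq_or_ne y 0 with rfl | hy
  · have hF0 := hhom 2 two_pos 0
    rw [smul_zero] at hF0
    rw [norm_zero, mul_zero]
    linarith
  · have hy_norm : 0 < ‖y‖ := norm_pos_iff.2 hy
    calc
      c * ‖y‖ ≤ F (‖y‖⁻¹ • y) * ‖y‖ := by
        gcongr
        exact hcF _ (by simp [norm_smul, hy])
      _ = F y := by
        rw [hhom _ (inv_pos.2 hy_norm), mul_right_comm, inv_mul_cancel₀ hy_norm.ne', one_mul]

theorem cartanAF_eq_inv_radon_general (m : ℕ) (hm : 1 ≤ m)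
    (F : EuclideanSpace ℝ (Fin (m + 1)) → ℝ) (hF : Measurable F) {c : ℝ} (hc : 0 < c)
    (hcF : ∀ y, c * ‖y‖ ≤ F y) (hhom : ∀ t : ℝ, 0 < t → ∀ y, F (t • y) = t * F y)
    (Z : EuclideanSpace ℝ (Fin (m + 1))) (hZ : Z ≠ 0) :
    cartanAF m F Z = 1 / radonT m (fun y => (F y ^ m)⁻¹) Z := by
  have : Nonempty (Fin m) := ⟨⟨0, hm⟩⟩
  obtain ⟨L, hL⟩ := exists_linearIsometry_range_eq_orthogonal hZ
  have hvolume := toReal_hausdorffMeasure_sublevel (hF.comp L.continuous.measurable)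
    (fun y hy => (mul_pos hc (norm_pos_iff.2 hy)).trans_le (by simpa using hcF (L y)))
    (fun t ht y => by simp only [Function.comp_apply, map_smul, hhom t ht])
  have hball : (μH[finrank ℝ (EuclideanSpace ℝ (Fin m))]
      (closedBall (0 : EuclideanSpace ℝ (Fin m)) 1)).toReal ≠ 0 :=
    ENNReal.toReal_ne_zero.2
      ⟨(measure_closedBall_pos _ _ one_pos).ne', measure_closedBall_lt_top.ne⟩
  simp only [finrank_euclideanSpace_fin, Function.comp_apply] at hvolume hball
  rw [cartanAF_eq_of_range_eq F hZ hL, radonT_eq_of_range_eq hm _ hL, hvolume, one_div_div]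
  field_simp

/-- The Cartan area integrand is the reciprocal of the Radon transform of `F^(-m)`
(Corollary 3.8): `A^F(Z) = 1 / R[F^(-m)](Z)` for `Z ≠ 0`. -/
theorem cartanAF_eq_inv_radon (m : ℕ) (hm : 1 ≤ m)
    (F : EuclideanSpace ℝ (Fin (m + 1)) → ℝ)
    (hF : Continuous F)
    (hpos : ∀ y : EuclideanSpace ℝ (Fin (m + 1)), y ≠ 0 → 0 < F y)
    (hhom : ∀ t : ℝ, 0 < t → ∀ y, F (t • y) = t * F y) :
    ∀ Z : EuclideanSpace ℝ (Fin (m + 1)), Z ≠ 0 →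
      cartanAF m F Z = 1 / radonT m (fun y => ((F y) ^ m)⁻¹) Z := by
  obtain ⟨c, hc, hcF⟩ := exists_pos_forall_mul_norm_le hF hpos hhom
  exact cartanAF_eq_inv_radon_general m hm F hF.measurable hc hcF hhom
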